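/- arXiv:1410.2342 — 2 statements merged into one kernel-verified Lean document; each statement's English description precedes it below -/
import Mathlib

section
/- If G is algorithmically stackable over A, with normal form set C and extended stacking map Φ for which S_Φ is computable, then the normal form function is computable: there exists a computable function f : List A → List A such that f(w) = y_{π(w)} (the unique word of C representing π(w)) for every word w. -/
namespace Stk

variable {G : Type*} [Group G] {A : Type*}

/-- Evaluation of a word over the generating alphabet in the group. -/
def eval (ρ : A → G) (w : List A) : G := (w.map ρ).prod

/-- `C` is a set of normal forms: evaluation restricted to `C` is a bijection onto `G`. -/
def IsNormalFormSet (ρ : A → G) (C : Set (List A)) : Prop :=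
  ∀ g : G, ∃! w : List A, w ∈ C ∧ eval ρ w = g

/-- The directed edge `(g, a)` of the Cayley graph is degenerate with respect to `C`. -/
def IsDegenerate (ρ : A → G) (ι : A → A) (C : Set (List A)) (e : G × A) : Prop :=
  ∃ y₁ y₂ : List A, y₁ ∈ C ∧ eval ρ y₁ = e.1 ∧ y₂ ∈ C ∧ eval ρ y₂ = e.1 * ρ e.2 ∧
    (y₁ ++ [e.2] = y₂ ∨ y₁ = y₂ ++ [ι e.2])

/-- A non-degenerate edge is recursive. -/
def IsRecursive (ρ : A → G) (ι : A → A) (C : Set (List A)) (e : G × A) : Prop :=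
  ¬ IsDegenerate ρ ι C e

/-- `e` is one of the edges along the path starting at `g` labeled by the word `w`. -/
def EdgeOnPath (ρ : A → G) (g : G) (w : List A) (e : G × A) : Prop :=
  ∃ i : Fin w.length, e = (g * eval ρ (w.take i), w.get i)

/-- A stackable structure for `(G, A)`: a normal form set `C` containing the empty word,
a well-founded strict partial order `lt` on the recursive edges, and a constant `k`,
such that each edge `(g, a)` admits a word of length at most `k` evaluating to `ρ a`,
each of whose edges along the path from `g` is degenerate or recursive and `lt`-below
`(g, a)`. -/
def IsStackableStructure (ρ : A → G) (ι : A → A) (C : Set (List A))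
    (lt : G × A → G × A → Prop) (k : ℕ) : Prop :=
  ([] : List A) ∈ C ∧ IsNormalFormSet ρ C ∧
  (∀ e e' : G × A, lt e e' → IsRecursive ρ ι C e ∧ IsRecursive ρ ι C e') ∧
  Transitive lt ∧ WellFounded lt ∧
  ∀ g : G, ∀ a : A, ∃ w : List A, w.length ≤ k ∧ eval ρ w = ρ a ∧
    ∀ e' : G × A, EdgeOnPath ρ g w e' → IsDegenerate ρ ι C e' ∨ lt e' (g, a)

/-- The pair `(G, A)` is stackable. -/
def IsStackable (ρ : A → G) (ι : A → A) : Prop :=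
  ∃ (C : Set (List A)) (lt : G × A → G × A → Prop) (k : ℕ),
    IsStackableStructure ρ ι C lt k

/-- A stacking map for a stackable structure. -/
def IsStackingMap (ρ : A → G) (ι : A → A) (C : Set (List A))
    (lt : G × A → G × A → Prop) (k : ℕ) (Φ : G × A → List A) : Prop :=
  ∀ e : G × A, IsRecursive ρ ι C e →
    eval ρ (Φ e) = ρ e.2 ∧ (Φ e).length ≤ k ∧
    ∀ e' : G × A, EdgeOnPath ρ e.1 (Φ e) e' → IsDegenerate ρ ι C e' ∨ lt e' e

/-- A stacking map extended by `Φ (g, a) = [a]` on degenerate edges. -/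
def IsExtendedStackingMap (ρ : A → G) (ι : A → A) (C : Set (List A))
    (lt : G × A → G × A → Prop) (k : ℕ) (Φ : G × A → List A) : Prop :=
  (∀ e : G × A, IsDegenerate ρ ι C e → Φ e = [e.2]) ∧ IsStackingMap ρ ι C lt k Φ

/-- A word is freely reduced if no letter is followed by its formal inverse. -/
def FreelyReduced (ι : A → A) (w : List A) : Prop :=
  List.Chain' (fun a b => b ≠ ι a) w


/-- The canonical `Primcodable` encoding of a finite type with decidable equality. -/
noncomputable instance (priority := 100) primcodableOfFintype {B : Type*} [Fintype B] [DecidableEq B] :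
    Primcodable B :=
  Primcodable.ofEquiv (Fin (Fintype.card B)) (Fintype.equivFin B)

/-! ### Computability helpers -/

theorem exists_computable_search {α σ : Type*} [Primcodable α] [Primcodable σ]
    (F : α → ℕ → Option σ) (hF : Computable₂ F) (ht : ∀ a, ∃ n b, b ∈ F a n) :
    ∃ f : α → σ, Computable f ∧ ∀ a, ∃ n, F a n = some (f a) := by
  have hd : ∀ a, (Nat.rfindOpt (F a)).Dom := fun a => Nat.rfindOpt_dom.2 (ht a)
  refine ⟨fun a => (Nat.rfindOpt (F a)).get (hd a), ?_, ?_⟩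
  · exact (Partrec.rfindOpt hF).of_eq_tot fun a => Part.get_mem _
  · intro a
    exact Nat.rfindOpt_spec (Part.get_mem (hd a))

theorem foldl_eq_rec {α σ : Type*} (f : σ → α → σ) (s : σ) (l : List α) (n : ℕ) :
    Nat.rec (motive := fun _ => σ) s
      (fun n t => Option.casesOn (motive := fun _ => σ) (l[n]?) t (fun a => f t a)) n
      = (l.take n).foldl f s := by
  induction n with
  | zero => simp
  | succ n ih =>
    simp only [ih, List.take_add_one, List.foldl_append]
    cases l[n]? <;> simp

theorem computable_foldl {α σ : Type*} [Primcodable α] [Primcodable σ]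
    (f : σ → α → σ) (hf : Computable₂ f) (s : σ) :
    Computable (fun l : List α => l.foldl f s) := by
  have h : Computable (fun l : List α => Nat.rec (motive := fun _ => σ) s
      (fun n t => Option.casesOn (motive := fun _ => σ) (l[n]?) t (fun a => f t a)) l.length) := by
    refine Computable.nat_rec (h := fun (l : List α) (p : ℕ × σ) =>
      Option.casesOn (motive := fun _ => σ) (l[p.1]?) p.2 (fun a => f p.2 a))
      Computable.list_length (Computable.const s) ?_
    refine Computable.option_casesOn (o := fun q : List α × (ℕ × σ) => q.1[q.2.1]?)
      (f := fun q => q.2.2) (g := fun q a => f q.2.2 a) ?_ ?_ ?_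
    · exact Computable.list_getElem?.comp Computable.fst (Computable.fst.comp Computable.snd)
    · exact Computable.snd.comp Computable.snd
    · exact hf.comp (Computable.snd.comp (Computable.snd.comp Computable.fst)) Computable.snd
  refine h.of_eq fun l => ?_
  rw [foldl_eq_rec]
  simp

theorem computable_iterate {α : Type*} [Primcodable α] (f : α → α) (hf : Computable f) :
    Computable₂ (fun (a : α) (n : ℕ) => f^[n] a) := by
  have h : Computable (fun p : α × ℕ => Nat.rec (motive := fun _ => α) p.1
      (fun _ t => f t) p.2) :=
    Computable.nat_rec (h := fun (_ : α × ℕ) (q : ℕ × α) => f q.2) Computable.snd Computable.fst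
      (hf.comp (Computable.snd.comp Computable.snd))
  refine h.of_eq fun p => ?_
  rcases p with ⟨a, n⟩
  induction n with
  | zero => rfl
  | succ n ih => simp only [Function.iterate_succ_apply'] at ih ⊢; rw [← ih]

/-- If the graph of a function is decidable then the function is computable. -/
theorem computable_of_graph {α σ : Type*} [Primcodable α] [Primcodable σ] (f : α → σ)
    (h : ComputablePred (fun x : α × σ => x.2 = f x.1)) : Computable f := by
  obtain ⟨D, hc, hD⟩ : ∃ D : α × σ → Bool, Computable D ∧ ∀ x, D x = true ↔ x.2 = f x.1 := by
    obtain ⟨hd, hc⟩ := h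
    exact ⟨_, hc, fun x => by simp⟩
  obtain ⟨g, hg, hgs⟩ := exists_computable_search
    (fun (a : α) (n : ℕ) => (Encodable.decode (α := σ) n).bind
      (fun b => cond (D (a, b)) (some b) none))
    (by
      refine Computable.option_bind (f := fun p : α × ℕ => Encodable.decode (α := σ) p.2)
        (g := fun p b => cond (D (p.1, b)) (some b) none)
        (Computable.decode.comp Computable.snd) ?_
      refine Computable.cond
        (hc.comp (Computable.pair (Computable.fst.comp Computable.fst) Computable.snd))
        (Computable.option_some.comp Computable.snd) (Computable.const none))
    (fun a => ⟨Encodable.encode (f a), f a, by simp [(hD (a, f a)).2 rfl]⟩)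
  refine hg.of_eq fun a => ?_
  obtain ⟨n, hn⟩ := hgs a
  rw [Option.bind_eq_some_iff] at hn
  obtain ⟨b, -, hb⟩ := hn
  cases hbf : D (a, b) with
  | true =>
    have := (hD _).1 hbf
    simp only [hbf, cond_true, Option.some.injEq] at hb
    rw [← hb]
    exact this
  | false => simp [hbf] at hb

/-! ### The rewriting procedure -/

/-- Replace every letter of the word by the value of the stacking map on its edge. -/
def stepFrom (ρ : A → G) (Φ : G × A → List A) : G → List A → List A
  | _, [] => []
  | g, a :: u => Φ (g, a) ++ stepFrom ρ Φ (g * ρ a) u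

/-- All edges along the path are degenerate. -/
def AllDeg (ρ : A → G) (ι : A → A) (C : Set (List A)) : G → List A → Prop
  | _, [] => True
  | g, a :: u => IsDegenerate ρ ι C (g, a) ∧ AllDeg ρ ι C (g * ρ a) u

/-- Process a letter on a (reversed) stack. -/
def push [DecidableEq A] (ι : A → A) (s : List A) (a : A) : List A :=
  if s.head? = some (ι a) then s.tail else a :: s

@[simp] theorem eval_nil (ρ : A → G) : eval ρ [] = 1 := rfl

@[simp] theorem eval_cons (ρ : A → G) (a : A) (u : List A) :
    eval ρ (a :: u) = ρ a * eval ρ u := by simp [eval]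

@[simp] theorem eval_append (ρ : A → G) (u v : List A) :
    eval ρ (u ++ v) = eval ρ u * eval ρ v := by simp [eval]

theorem stepFrom_append (ρ : A → G) (Φ : G × A → List A) (g : G) (u v : List A) :
    stepFrom ρ Φ g (u ++ v) = stepFrom ρ Φ g u ++ stepFrom ρ Φ (g * eval ρ u) v := by
  induction u generalizing g with
  | nil => simp [stepFrom]
  | cons a u ih => simp [stepFrom, ih, mul_assoc]

theorem AllDeg_append (ρ : A → G) (ι : A → A) (C : Set (List A)) (g : G) (u v : List A) :
    AllDeg ρ ι C g (u ++ v) ↔ AllDeg ρ ι C g u ∧ AllDeg ρ ι C (g * eval ρ u) v := by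
  induction u generalizing g with
  | nil => simp [AllDeg]
  | cons a u ih => simp [AllDeg, ih, mul_assoc, and_assoc]

section
variable {ρ : A → G} {ι : A → A} {C : Set (List A)} {lt : G × A → G × A → Prop} {k : ℕ}
  {Φ : G × A → List A}

theorem eval_Phi (hΦ : IsExtendedStackingMap ρ ι C lt k Φ) (e : G × A) :
    eval ρ (Φ e) = ρ e.2 := by
  by_cases h : IsDegenerate ρ ι C e
  · rw [hΦ.1 e h]; simp
  · exact (hΦ.2 e h).1

theorem eval_stepFrom (hΦ : IsExtendedStackingMap ρ ι C lt k Φ) (g : G) (u : List A) :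
    eval ρ (stepFrom ρ Φ g u) = eval ρ u := by
  induction u generalizing g with
  | nil => simp [stepFrom]
  | cons a u ih => simp [stepFrom, ih, eval_Phi hΦ]

theorem eval_iterate (hΦ : IsExtendedStackingMap ρ ι C lt k Φ) (g : G) (u : List A) (n : ℕ) :
    eval ρ ((stepFrom ρ Φ g)^[n] u) = eval ρ u := by
  induction n with
  | zero => rfl
  | succ n ih => rw [Function.iterate_succ_apply', eval_stepFrom hΦ, ih]

theorem iterate_append (hΦ : IsExtendedStackingMap ρ ι C lt k Φ) (g : G) (u v : List A) (n : ℕ) :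
    (stepFrom ρ Φ g)^[n] (u ++ v)
      = (stepFrom ρ Φ g)^[n] u ++ (stepFrom ρ Φ (g * eval ρ u))^[n] v := by
  induction n with
  | zero => rfl
  | succ n ih => simp only [Function.iterate_succ_apply', ih, stepFrom_append, eval_iterate hΦ]

theorem stepFrom_of_AllDeg (hΦ : IsExtendedStackingMap ρ ι C lt k Φ) (g : G) (u : List A)
    (h : AllDeg ρ ι C g u) : stepFrom ρ Φ g u = u := by
  induction u generalizing g with
  | nil => rfl
  | cons a u ih => simp [stepFrom, ih _ h.2, hΦ.1 _ h.1]

theorem AllDeg_mono (hΦ : IsExtendedStackingMap ρ ι C lt k Φ) (g : G) (u : List A) {m n : ℕ}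
    (hmn : m ≤ n) (h : AllDeg ρ ι C g ((stepFrom ρ Φ g)^[m] u)) :
    AllDeg ρ ι C g ((stepFrom ρ Φ g)^[n] u) := by
  induction hmn with
  | refl => exact h
  | step _ ih => rwa [Function.iterate_succ_apply', stepFrom_of_AllDeg hΦ _ _ ih]

theorem terminates_of_edges (hΦ : IsExtendedStackingMap ρ ι C lt k Φ) (g : G) (u : List A)
    (h : ∀ e, EdgeOnPath ρ g u e → ∃ n, AllDeg ρ ι C e.1 ((stepFrom ρ Φ e.1)^[n] [e.2])) :
    ∃ n, AllDeg ρ ι C g ((stepFrom ρ Φ g)^[n] u) := by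
  induction u generalizing g with
  | nil => exact ⟨0, trivial⟩
  | cons a u ih =>
    obtain ⟨m, hm⟩ := h (g, a) ⟨⟨0, by simp⟩, by simp⟩
    obtain ⟨n, hn⟩ := ih (g * ρ a) (by
      rintro e ⟨⟨i, hi⟩, rfl⟩
      exact h _ ⟨⟨i + 1, by simpa using hi⟩, by simp [mul_assoc]⟩)
    refine ⟨max m n, ?_⟩
    have e1 : a :: u = [a] ++ u := rfl
    rw [e1, iterate_append hΦ, AllDeg_append, eval_iterate hΦ]
    have e2 : eval ρ [a] = ρ a := by simp
    rw [e2]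
    exact ⟨AllDeg_mono hΦ _ _ (le_max_left _ _) hm, AllDeg_mono hΦ _ _ (le_max_right _ _) hn⟩

theorem terminates_edge (hwf : WellFounded lt) (hΦ : IsExtendedStackingMap ρ ι C lt k Φ)
    (e : G × A) : ∃ n, AllDeg ρ ι C e.1 ((stepFrom ρ Φ e.1)^[n] [e.2]) := by
  induction e using hwf.induction with
  | _ e ih =>
    by_cases hd : IsDegenerate ρ ι C e
    · exact ⟨0, hd, trivial⟩
    · obtain ⟨n, hn⟩ := terminates_of_edges hΦ e.1 (Φ e) (by
        intro e' he'
        rcases (hΦ.2 e hd).2.2 e' he' with h | h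
        · exact ⟨0, h, trivial⟩
        · exact ih e' h)
      refine ⟨n + 1, ?_⟩
      have : stepFrom ρ Φ e.1 [e.2] = Φ e := by simp [stepFrom]
      rwa [Function.iterate_succ_apply, this]

theorem terminates (hwf : WellFounded lt) (hΦ : IsExtendedStackingMap ρ ι C lt k Φ)
    (g : G) (u : List A) : ∃ n, AllDeg ρ ι C g ((stepFrom ρ Φ g)^[n] u) :=
  terminates_of_edges hΦ g u fun e _ => terminates_edge hwf hΦ e

theorem AllDeg_of_fixed (hwf : WellFounded lt) (hΦ : IsExtendedStackingMap ρ ι C lt k Φ)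
    (g : G) (u : List A) (h : stepFrom ρ Φ g u = u) : AllDeg ρ ι C g u := by
  obtain ⟨n, hn⟩ := terminates hwf hΦ g u
  rwa [Function.iterate_fixed h] at hn

theorem foldl_push [DecidableEq A] (hρι : ∀ a : A, ρ (ι a) = (ρ a)⁻¹)
    (hC : IsNormalFormSet ρ C) (g : G) (u s : List A)
    (hu : AllDeg ρ ι C g u) (hs : eval ρ s.reverse = g)
    (hsuf : ∀ t, t <:+ s → t.reverse ∈ C) :
    (u.foldl (push ι) s).reverse ∈ C ∧ eval ρ (u.foldl (push ι) s).reverse = g * eval ρ u := by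
  induction u generalizing g s with
  | nil => exact ⟨hsuf _ (List.suffix_refl _), by simpa using hs⟩
  | cons a u ih =>
    obtain ⟨⟨y₁, y₂, h1, e1, h2, e2, h12⟩, hu'⟩ := hu
    have hy1 : y₁ = s.reverse :=
      (hC g).unique ⟨h1, e1⟩ ⟨hsuf _ (List.suffix_refl _), hs⟩
    have key : eval ρ (push ι s a).reverse = g * ρ a ∧
        ∀ t, t <:+ push ι s a → t.reverse ∈ C := by
      unfold push
      split_ifs with hh
      · cases s with
        | nil => simp at hh
        | cons b s =>
          simp at hh
          subst hh
          refine ⟨?_, fun t ht => hsuf t (ht.trans (List.suffix_cons _ _))⟩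
          rw [← hs]
          simp [hρι]
      · refine ⟨by simp [hs], fun t ht => ?_⟩
        rcases List.suffix_cons_iff.1 ht with rfl | ht
        · rcases h12 with h | h
          · rw [hy1] at h
            simpa [h] using h2
          · exfalso
            apply hh
            have : s = ι a :: y₂.reverse := by
              have := congrArg List.reverse (hy1.symm.trans h)
              simpa using this
            simp [this]
        · exact hsuf t ht
    have := ih (g * ρ a) (push ι s a) hu' key.1 key.2
    simpa [mul_assoc] using this

theorem foldl_step (p o u : List A) :
    u.foldl (fun (s : List A × List A) a => (s.1 ++ [a], s.2 ++ Φ (eval ρ s.1, a))) (p, o)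
      = (p ++ u, o ++ stepFrom ρ Φ (eval ρ p) u) := by
  induction u generalizing p o with
  | nil => simp [stepFrom]
  | cons a u ih => simp [ih, stepFrom]

end

theorem computable_push [DecidableEq A] [Primcodable A] [Finite A] (ι : A → A) :
    Computable₂ (push ι) := by
  have : Primrec (fun p : List A × A => if p.1.head? = some (ι p.2) then p.1.tail else p.2 :: p.1) :=
    Primrec.ite
      (Primrec.eq.comp (Primrec.list_head?.comp Primrec.fst)
        (Primrec.option_some.comp ((Primrec.dom_finite ι).comp Primrec.snd)))
      (Primrec.list_tail.comp Primrec.fst)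
      (Primrec.list_cons.comp Primrec.snd Primrec.fst)
  exact this.to_comp

theorem computable_step [Primcodable A] (ρ : A → G) (Φ : G × A → List A)
    (hS : ComputablePred (fun x : List A × A × List A => x.2.2 = Φ (eval ρ x.1, x.2.1))) :
    Computable (stepFrom ρ Φ 1) := by
  have h1 : Computable (fun x : List A × A => Φ (eval ρ x.1, x.2)) := by
    apply computable_of_graph
    obtain ⟨hd, hc⟩ := hS
    refine ⟨fun x => hd (x.1.1, x.1.2, x.2), ?_⟩
    exact hc.comp (Computable.pair (Computable.fst.comp Computable.fst)
      (Computable.pair (Computable.snd.comp Computable.fst) Computable.snd))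
  have hF : Computable₂ (fun (s : List A × List A) (a : A) =>
      (s.1 ++ [a], s.2 ++ Φ (eval ρ s.1, a))) := by
    have a1 : Computable (fun q : (List A × List A) × A => q.1.1 ++ [q.2]) :=
      Computable.list_concat.comp (Computable.fst.comp Computable.fst) Computable.snd
    have a2 : Computable (fun q : (List A × List A) × A => Φ (eval ρ q.1.1, q.2)) :=
      Computable.comp (f := fun x : List A × A => Φ (eval ρ x.1, x.2))
        (g := fun q : (List A × List A) × A => (q.1.1, q.2)) h1
        (Computable.pair (Computable.fst.comp Computable.fst) Computable.snd)
    have a3 : Computable (fun q : (List A × List A) × A => q.1.2 ++ Φ (eval ρ q.1.1, q.2)) :=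
      Computable.list_append.comp (Computable.snd.comp Computable.fst) a2
    exact Computable.pair a1 a3
  have h2 := computable_foldl _ hF (([] : List A), ([] : List A))
  refine (Computable.snd.comp h2).of_eq fun u => ?_
  rw [foldl_step]
  simp

/-- for an algorithmically stackable group the normal form function is
computable. -/
theorem normalForm_computable_of_algorithmically_stackable {G : Type*} [Group G]
    {A : Type*} [Fintype A] [DecidableEq A]
    (ρ : A → G) (ι : A → A)
    (hgen : Subgroup.closure (Set.range ρ) = ⊤)
    (hne : ∀ a : A, ρ a ≠ 1)
    (hinv : Function.Involutive ι)
    (hρι : ∀ a : A, ρ (ι a) = (ρ a)⁻¹)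
    (C : Set (List A)) (lt : G × A → G × A → Prop) (k : ℕ)
    (hstk : IsStackableStructure ρ ι C lt k)
    (Φ : G × A → List A) (hΦ : IsExtendedStackingMap ρ ι C lt k Φ)
    (hS : ComputablePred (fun x : List A × A × List A => x.2.2 = Φ (eval ρ x.1, x.2.1))) :
    ∃ f : List A → List A, Computable f ∧
      ∀ w : List A, f w ∈ C ∧ eval ρ (f w) = eval ρ w := by
  obtain ⟨hnil, hC, -, -, hwf, -⟩ := hstk
  have hstep := computable_step ρ Φ hS
  have hit := computable_iterate _ hstep
  have hred : Computable (fun u : List A => (u.foldl (push ι) []).reverse) :=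
    Computable.list_reverse.comp (computable_foldl _ (computable_push ι) [])
  have hbeq : Computable₂ (fun u v : List A => decide (u = v)) := Primrec.eq.decide.to_comp
  obtain ⟨f, hf, hfs⟩ := exists_computable_search
    (fun (w : List A) (n : ℕ) =>
      cond (decide (stepFrom ρ Φ 1 ((stepFrom ρ Φ 1)^[n] w) = (stepFrom ρ Φ 1)^[n] w))
        (some (((stepFrom ρ Φ 1)^[n] w).foldl (push ι) []).reverse) none)
    (Computable.cond (hbeq.comp (hstep.comp hit) hit)
      (Computable.option_some.comp (hred.comp hit)) (Computable.const none))
    (by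
      intro w
      obtain ⟨n, hn⟩ := terminates hwf hΦ 1 w
      exact ⟨n, _, by simp [stepFrom_of_AllDeg hΦ _ _ hn]; rfl⟩)
  refine ⟨f, hf, fun w => ?_⟩
  obtain ⟨n, hn⟩ := hfs w
  by_cases hfix : stepFrom ρ Φ 1 ((stepFrom ρ Φ 1)^[n] w) = (stepFrom ρ Φ 1)^[n] w
  · have hd := AllDeg_of_fixed hwf hΦ 1 _ hfix
    have := foldl_push hρι hC 1 _ [] hd (by simp) (by simpa using hnil)
    simp only [hfix, decide_true, cond_true, Option.some.injEq] at hn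
    rw [hn, eval_iterate hΦ, one_mul] at this
    exact this
  · simp [hfix] at hn

end Stk
end

section
/- If G is algorithmically stackable over A, with normal form set C and extended stacking map Φ for which S_Φ is computable, then membership in C is decidable: the predicate (fun w : List A => w ∈ C) is a computable predicate (ComputablePred). -/
namespace Stk

variable {G : Type*} [Group G] {A : Type*}

/-- All prefixes of the normal form of `g` are normal forms. -/
def GoodElt (ρ : A → G) (C : Set (List A)) (g : G) : Prop :=
  ∀ w, w ∈ C → eval ρ w = g → ∀ v, v <+: w → v ∈ C

theorem nf_unique {ρ : A → G} {C : Set (List A)} (h : IsNormalFormSet ρ C) {u v : List A}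
    (hu : u ∈ C) (hv : v ∈ C) (e : eval ρ u = eval ρ v) : u = v :=
  (h (eval ρ v)).unique ⟨hu, e⟩ ⟨hv, rfl⟩

theorem eval_concat (ρ : A → G) (u : List A) (a : A) :
    eval ρ (u ++ [a]) = eval ρ u * ρ a := by
  simp [eval]

theorem good_path (ρ : A → G) (C : Set (List A)) (w : List A) : ∀ g : G,
    (∀ e' : G × A, EdgeOnPath ρ g w e' → GoodElt ρ C e'.1 → GoodElt ρ C (e'.1 * ρ e'.2)) →
    GoodElt ρ C g → GoodElt ρ C (g * eval ρ w) := by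
  induction w with
  | nil => intro g _ hg; simpa [eval] using hg
  | cons a w ih =>
    intro g h hg
    have h0 : GoodElt ρ C (g * ρ a) := h (g, a) ⟨⟨0, by simp⟩, by simp [eval]⟩ hg
    have := ih (g * ρ a) (fun e' he' => h e' ?_) h0
    · simpa [eval, mul_assoc] using this
    · obtain ⟨i, hi⟩ := he'
      refine ⟨⟨i.1 + 1, by simp⟩, ?_⟩
      rw [hi]
      simp [eval, mul_assoc]

theorem good_degenerate {ρ : A → G} {ι : A → A} {C : Set (List A)}
    (hC : IsNormalFormSet ρ C) {e : G × A} (hd : IsDegenerate ρ ι C e)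
    (hg : GoodElt ρ C e.1) : GoodElt ρ C (e.1 * ρ e.2) := by
  obtain ⟨y₁, y₂, h1, e1, h2, e2, h⟩ := hd
  intro w hw ew v hv
  obtain rfl : w = y₂ := nf_unique hC hw h2 (ew.trans e2.symm)
  rcases h with h | h
  · rw [← h, List.prefix_concat_iff] at hv
    rcases hv with hv | hv
    · rw [hv, h]; exact hw
    · exact hg y₁ h1 e1 v hv
  · exact hg y₁ h1 e1 v (hv.trans (by rw [h]; exact List.prefix_append _ _))

theorem prefix_closed {ρ : A → G} {ι : A → A} {C : Set (List A)}
    {lt : G × A → G × A → Prop} {k : ℕ} (hstk : IsStackableStructure ρ ι C lt k)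
    {w v : List A} (hw : w ∈ C) (hv : v <+: w) : v ∈ C := by
  obtain ⟨hnil, hC, -, -, hwf, hst⟩ := hstk
  have key : ∀ e : G × A, GoodElt ρ C e.1 → GoodElt ρ C (e.1 * ρ e.2) := by
    intro e
    induction e using hwf.induction with
    | _ e ih =>
      intro hg
      obtain ⟨u, -, hu, hp⟩ := hst e.1 e.2
      rw [← hu]
      refine good_path ρ C u e.1 (fun e' he' hg' => ?_) hg
      rcases hp e' he' with hd | hl
      · exact good_degenerate hC hd hg'
      · exact ih e' hl hg'
  have h1 : GoodElt ρ C 1 := by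
    intro u hu eu v hv
    obtain rfl : u = [] := nf_unique hC hu hnil (by rw [eu]; simp [eval])
    rw [List.prefix_nil.1 hv]; exact hnil
  have := good_path ρ C w 1 (fun e' _ => key e') h1
  exact this w hw (by simp) v hv

theorem mem_concat_iff {ρ : A → G} {ι : A → A} {C : Set (List A)}
    (hinv : Function.Involutive ι) (hρι : ∀ a : A, ρ (ι a) = (ρ a)⁻¹)
    {lt : G × A → G × A → Prop} {k : ℕ} (hstk : IsStackableStructure ρ ι C lt k)
    (u : List A) (a : A) :
    u ++ [a] ∈ C ↔ u ∈ C ∧ IsDegenerate ρ ι C (eval ρ u, a) ∧ u.getLast? ≠ some (ι a) := by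
  have hC := hstk.2.1
  constructor
  · intro h
    have hu : u ∈ C := prefix_closed hstk h (List.prefix_append _ _)
    refine ⟨hu, ⟨u, u ++ [a], hu, rfl, h, eval_concat ρ u a, Or.inl rfl⟩, ?_⟩
    intro hl
    obtain ⟨v, rfl⟩ := List.getLast?_eq_some_iff.1 hl
    have hv : v ∈ C := prefix_closed hstk hu (List.prefix_append _ _)
    have := nf_unique hC h hv (by rw [eval_concat, eval_concat, hρι]; group)
    have := congrArg List.length this
    simp at this
  · rintro ⟨hu, ⟨y₁, y₂, h1, e1, h2, e2, h⟩, hl⟩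
    obtain rfl : y₁ = u := nf_unique hC h1 hu e1
    rcases h with h | h
    · simp only at h
      rw [h]; exact h2
    · exact absurd (by rw [h]; simp) hl

theorem degenerate_iff {ρ : A → G} {ι : A → A} {C : Set (List A)}
    {lt : G × A → G × A → Prop} {k : ℕ} (hstk : IsStackableStructure ρ ι C lt k)
    {Φ : G × A → List A} (hΦ : IsExtendedStackingMap ρ ι C lt k Φ) (e : G × A) :
    IsDegenerate ρ ι C e ↔ [e.2] = Φ e := by
  refine ⟨fun h => (hΦ.1 e h).symm, fun h => ?_⟩
  by_contra hr
  obtain ⟨-, -, hp⟩ := hΦ.2 e hr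
  rcases hp e (by rw [← h]; exact ⟨⟨0, by simp⟩, by simp [eval]⟩) with hd | hl
  · exact hr hd
  · exact hstk.2.2.2.2.1.irrefl.irrefl e hl

/-- for an algorithmically stackable group, membership in the normal form
set is decidable. -/
theorem mem_normalForms_computable_of_algorithmically_stackable {G : Type*} [Group G]
    {A : Type*} [Fintype A] [DecidableEq A]
    (ρ : A → G) (ι : A → A)
    (hgen : Subgroup.closure (Set.range ρ) = ⊤)
    (hne : ∀ a : A, ρ a ≠ 1)
    (hinv : Function.Involutive ι)
    (hρι : ∀ a : A, ρ (ι a) = (ρ a)⁻¹)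
    (C : Set (List A)) (lt : G × A → G × A → Prop) (k : ℕ)
    (hstk : IsStackableStructure ρ ι C lt k)
    (Φ : G × A → List A) (hΦ : IsExtendedStackingMap ρ ι C lt k Φ)
    (hS : ComputablePred (fun x : List A × A × List A => x.2.2 = Φ (eval ρ x.1, x.2.1))) :
    ComputablePred (fun w : List A => w ∈ C) := by
  classical
  obtain ⟨hdec, hcomp⟩ := hS
  refine ⟨Classical.decPred _, ?_⟩
  let F : List A × A × List A → Bool := fun x => decide (x.2.2 = Φ (eval ρ x.1, x.2.1))
  have hF : Computable F := hcomp.of_eq fun x => by simp only [F]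
  let T : List A → A → Bool := fun u a => F (u, a, [a]) && !decide (u.reverse.head? = some (ι a))
  have hT : Computable₂ T := by
    have h1 : Computable fun p : List A × A => F (p.1, p.2, [p.2]) :=
      hF.comp (Computable.fst.pair (Computable.snd.pair
        (Computable.list_cons.comp Computable.snd (Computable.const []))))
    have h2 : Primrec fun p : List A × A => !decide (p.1.reverse.head? = some (ι p.2)) :=
      Primrec.not.comp ((Primrec.eq.comp
        (Primrec.list_head?.comp (Primrec.list_reverse.comp Primrec.fst))
        (Primrec.option_some.comp ((Primrec.dom_finite ι).comp Primrec.snd))).decide)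
    exact Primrec.and.to_comp.comp h1 h2.to_comp
  have hTspec : ∀ u a, u ++ [a] ∈ C ↔ u ∈ C ∧ T u a = true := by
    intro u a
    rw [mem_concat_iff hinv hρι hstk, degenerate_iff hstk hΦ]
    simp [T, F]
  let H : List A → ℕ × Bool → Bool := fun w p =>
    p.2 && (Option.casesOn (motive := fun _ => Bool) (w[p.1]?) true (fun a => T (w.take p.1) a))
  have hH : Computable₂ H := by
    have h1 : Computable fun q : List A × ℕ × Bool =>
        (Option.casesOn (motive := fun _ => Bool) (q.1[q.2.1]?) true
          (fun a => T (q.1.take q.2.1) a)) := by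
      refine Computable.option_casesOn
        (Computable.list_getElem?.comp Computable.fst (Computable.fst.comp Computable.snd))
        (Computable.const true) ?_
      exact hT.comp
        (Primrec.list_take.to_comp.comp
          (Computable.fst.comp (Computable.snd.comp Computable.fst))
          (Computable.fst.comp Computable.fst)) Computable.snd
    exact Primrec.and.to_comp.comp (Computable.snd.comp Computable.snd) h1
  have hrec := Computable.nat_rec (f := fun w : List A => w.length) (g := fun _ => true) (h := H)
    Computable.list_length (Computable.const true) hH
  have spec : ∀ (w : List A) (n : ℕ),
      (Nat.rec (motive := fun _ => Bool) true (fun y ih => H w (y, ih)) n = true) ↔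
        w.take n ∈ C := by
    intro w n
    induction n with
    | zero => simpa using hstk.1
    | succ n ih =>
      simp only [H, Bool.and_eq_true] at ih ⊢
      rw [ih, List.take_add_one]
      cases hn : w[n]? with
      | none => simp
      | some a => simpa using (hTspec (w.take n) a).symm
  refine hrec.of_eq fun w => ?_
  rw [Bool.eq_iff_iff, decide_eq_true_iff]
  simpa using spec w w.length

end Stk
end
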